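/- Let L ⊂ S be a graded lattice ideal of dimension 1 with defining homogeneous lattice 𝓛 of rank s−1. Then there exist positive integers n_1, …, n_{s−1} such that: (a) the complete intersection ideal L' = (t_1^{n_1} − t_s^{n_1}, …, t_{s−1}^{n_{s−1}} − t_s^{n_{s−1}}) is contained in L; (b) the index of regularity of S/(t_s, L) is at most the index of regularity of S/(t_s, L'), which equals Σ_{i=1}^{s−1}(n_i − 1) + 1; and (c) H_L(d) = H_L(d−1) = deg S/L for every d ≥ Σ_{i=1}^{s−1}(n_i − 1) + 1. -/

import Mathlib

open MvPolynomial

/-- The binomial `t^{a⁺} - t^{a⁻}` associated to an integer vector `a ∈ ℤ^s`,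
where `a⁺` and `a⁻` are the positive and negative parts of `a`. -/
noncomputable def latticeBinomial (K : Type*) [Field K] {s : ℕ} (a : Fin s → ℤ) :
    MvPolynomial (Fin s) K :=
  (∏ i, X i ^ (a i).toNat) - ∏ i, X i ^ (-(a i)).toNat

/-- The lattice ideal `I(L) = ({t^{a⁺} - t^{a⁻} : a ∈ L})` of a lattice `L ⊆ ℤ^s`. -/
noncomputable def latticeIdeal (K : Type*) [Field K] {s : ℕ} (L : AddSubgroup (Fin s → ℤ)) :
    Ideal (MvPolynomial (Fin s) K) :=
  Ideal.span {f | ∃ a ∈ L, f = latticeBinomial K a}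

/-- The Hilbert function `H_I(d) = dim_K S_d / I_d` of `S/I`, where `S_d` is the space of
homogeneous polynomials of degree `d` (together with `0`) and `I_d = I ∩ S_d`. -/
noncomputable def hilbertFunction {K : Type*} [Field K] {s : ℕ}
    (I : Ideal (MvPolynomial (Fin s) K)) (d : ℕ) : ℕ :=
  Module.finrank K
    (↥(homogeneousSubmodule (Fin s) K d) ⧸
      (Submodule.comap (homogeneousSubmodule (Fin s) K d).subtype (Submodule.restrictScalars K I)))

/-- The index of regularity `reg(S/I)`: the least `r ≥ 0` such that the Hilbert polynomial
`h_I` agrees with the Hilbert function `H_I` at every `d ≥ r` (a polynomial agreeing with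
`H_I` on all of `[r, ∞)` is necessarily the Hilbert polynomial). -/
noncomputable def indexOfRegularity {K : Type*} [Field K] {s : ℕ}
    (I : Ideal (MvPolynomial (Fin s) K)) : ℕ :=
  sInf {r : ℕ | ∃ h : Polynomial ℚ, ∀ d : ℕ, r ≤ d →
    Polynomial.eval (d : ℚ) h = hilbertFunction I d}

/-! The ideal `L` is the kernel of `S → K[ℤ^s/𝓛]`, and each variable maps to a unit there, so `t_s`
is a nonzerodivisor on `S/L` and `H_L(d) - H_L(d-1) = H_{(t_s, L)}(d)`. Since `𝓛` has full rank in
the lattice of vectors with coordinate sum zero, some positive multiple `n_i (e_i - e_s)` lies in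
`𝓛`, which gives `L' ⊆ L`. As `(t_s, L')` is the monomial ideal
`(t_1^{n_1}, …, t_{s-1}^{n_{s-1}}, t_s)`, whose quotient has top degree `∑ (n_i - 1)`, the Hilbert
function of `S/(t_s, L)` vanishes beyond that degree. -/

section MonomialAlgebra

open AddMonoidAlgebra in
lemma mem_of_mapDomain_eq_zero {R M N : Type*} [Ring R] [Nonempty M] (φ : M → N)
    {W : Submodule R (AddMonoidAlgebra R M)}
    (hW : ∀ a b, φ a = φ b → single a 1 - single b 1 ∈ W)
    {f : AddMonoidAlgebra R M} (hf : mapDomain φ f = 0) : f ∈ W := by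
  -- Modulo `W`, every exponent may be replaced by a chosen representative of its fibre.
  let rep : N → M := Function.invFun φ
  have sub_mem : ∀ g : AddMonoidAlgebra R M, g - mapDomain rep (mapDomain φ g) ∈ W := by
    intro g
    induction g using AddMonoidAlgebra.induction_linear with
    | zero => simp
    | add g h hg hh => simpa only [mapDomain_add, add_sub_add_comm] using W.add_mem hg hh
    | single a r =>
      have hrep : φ a = φ (rep (φ a)) := (Function.invFun_eq ⟨a, rfl⟩).symm
      simpa [smul_sub] using W.smul_mem r (hW a _ hrep)
  simpa [hf] using sub_mem f

end MonomialAlgebra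

section LatticeIdeal

variable {K : Type*} [Field K] {s : ℕ} {𝓛 : AddSubgroup (Fin s → ℤ)}

/-- The class modulo `𝓛` of the exponent of a monomial, that is, the degree of the monomial in the
fine grading of `S` for which the lattice ideal of `𝓛` is homogeneous. -/
noncomputable def exponentClass {σ : Type*} (𝓛 : AddSubgroup (σ → ℤ)) :
    (σ →₀ ℕ) →+ (σ → ℤ) ⧸ 𝓛 :=
  (QuotientAddGroup.mk' 𝓛).comp
    (((Nat.castAddMonoidHom ℤ).compLeft σ).comp Finsupp.coeFnAddHom)

lemma exponentClass_eq_iff {σ : Type*} {𝓛 : AddSubgroup (σ → ℤ)} {a b : σ →₀ ℕ} :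
    exponentClass 𝓛 a = exponentClass 𝓛 b ↔ (fun i => (a i : ℤ) - b i) ∈ 𝓛 := by
  rw [eq_comm]
  refine QuotientAddGroup.eq.trans ?_
  rw [neg_add_eq_sub]
  rfl

lemma monomial_one_eq_prod_X_pow {σ R : Type*} [Fintype σ] [CommSemiring R] (a : σ →₀ ℕ) :
    monomial a (1 : R) = ∏ i, X i ^ a i := by
  rw [monomial_eq, C_1, one_mul, Finsupp.prod_fintype _ _ fun _ => pow_zero _]

lemma latticeBinomial_eq_monomial_sub_monomial (a : Fin s → ℤ) :
    latticeBinomial K a =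
      monomial (Finsupp.equivFunOnFinite.symm fun i => (a i).toNat) 1 -
        monomial (Finsupp.equivFunOnFinite.symm fun i => (-a i).toNat) 1 := by
  simp [latticeBinomial, monomial_one_eq_prod_X_pow]

lemma monomial_sub_monomial_mem_latticeIdeal {a b : Fin s →₀ ℕ}
    (h : exponentClass 𝓛 a = exponentClass 𝓛 b) :
    monomial a (1 : K) - monomial b 1 ∈ latticeIdeal K 𝓛 := by
  have factor_inf : monomial a (1 : K) - monomial b 1 =
      monomial (a ⊓ b) 1 * latticeBinomial K fun i => (a i : ℤ) - b i := by
    rw [latticeBinomial_eq_monomial_sub_monomial, mul_sub, monomial_mul, monomial_mul, one_mul]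
    congr 2 <;> congr 1 <;> ext i <;> simp <;> omega
  rw [factor_inf]
  exact Ideal.mul_mem_left _ _ (Ideal.subset_span ⟨_, exponentClass_eq_iff.1 h, rfl⟩)

lemma X_pow_sub_X_pow_mem_latticeIdeal {i j : Fin s} {n : ℕ}
    (h : n • (Pi.single i 1 - Pi.single j 1) ∈ 𝓛) :
    (X i ^ n - X j ^ n : MvPolynomial (Fin s) K) ∈ latticeIdeal K 𝓛 := by
  rw [X_pow_eq_monomial, X_pow_eq_monomial]
  refine monomial_sub_monomial_mem_latticeIdeal (exponentClass_eq_iff.2 ?_)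
  convert h using 1
  ext k
  simp [Finsupp.single_eq_pi_single, Pi.single_apply, mul_sub]

theorem latticeIdeal_eq_ker :
    latticeIdeal K 𝓛 =
      RingHom.ker (AddMonoidAlgebra.mapDomainAlgHom K K (exponentClass 𝓛)) := by
  refine le_antisymm (Ideal.span_le.2 ?_) fun f hf => ?_
  · rintro _ ⟨a, ha, rfl⟩
    have hclass : exponentClass 𝓛 (Finsupp.equivFunOnFinite.symm fun i => (a i).toNat) =
        exponentClass 𝓛 (Finsupp.equivFunOnFinite.symm fun i => (-a i).toNat) := by
      rw [exponentClass_eq_iff]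
      convert ha using 2 with i
      exact Int.toNat_sub_toNat_neg (a i)
    rw [latticeBinomial_eq_monomial_sub_monomial, SetLike.mem_coe, RingHom.mem_ker, map_sub,
      sub_eq_zero]
    change AddMonoidAlgebra.mapDomain _ (AddMonoidAlgebra.single _ _) =
      AddMonoidAlgebra.mapDomain _ (AddMonoidAlgebra.single _ _)
    rw [AddMonoidAlgebra.mapDomain_single, AddMonoidAlgebra.mapDomain_single, hclass]
  · exact mem_of_mapDomain_eq_zero (W := (latticeIdeal K 𝓛).restrictScalars K) (exponentClass 𝓛)
      (fun _ _ => monomial_sub_monomial_mem_latticeIdeal) hf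

theorem isSMulRegular_X_quotient_latticeIdeal (l : Fin s) :
    IsSMulRegular (MvPolynomial (Fin s) K ⧸ latticeIdeal K 𝓛) (X l : MvPolynomial (Fin s) K) := by
  rw [isSMulRegular_quotient_iff_mem_of_smul_mem]
  intro f hf
  rw [latticeIdeal_eq_ker, RingHom.mem_ker] at hf ⊢
  let g := exponentClass 𝓛 (Finsupp.single l 1)
  have isUnit_X : IsUnit (AddMonoidAlgebra.mapDomainAlgHom K K (exponentClass 𝓛) (X l)) := by
    refine .of_mul_eq_one (AddMonoidAlgebra.single (-g) 1) ?_
    change AddMonoidAlgebra.mapDomain _ (AddMonoidAlgebra.single _ _) * _ = _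
    rw [AddMonoidAlgebra.mapDomain_single, AddMonoidAlgebra.single_mul_single]
    simp [g, AddMonoidAlgebra.one_def]
  rwa [smul_eq_mul, map_mul, isUnit_X.mul_right_eq_zero] at hf

attribute [local instance] gradedAlgebra in
theorem isHomogeneous_latticeIdeal (hhom : ∀ a ∈ 𝓛, ∑ i, a i = 0) :
    (latticeIdeal K 𝓛).IsHomogeneous (homogeneousSubmodule (Fin s) K) := by
  refine Ideal.homogeneous_span _ _ ?_
  rintro _ ⟨a, ha, rfl⟩
  refine ⟨∑ i, (a i).toNat, ?_⟩
  have hdeg : ∑ i, (-a i).toNat = ∑ i, (a i).toNat := by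
    have hsum := hhom a ha
    rw [← Finset.sum_congr rfl fun i _ => Int.toNat_sub_toNat_neg (a i), Finset.sum_sub_distrib,
      sub_eq_zero] at hsum
    exact_mod_cast hsum.symm
  rw [latticeBinomial_eq_monomial_sub_monomial]
  refine .sub (isHomogeneous_monomial _ ?_) (isHomogeneous_monomial _ ?_)
  · simp [Finsupp.degree_eq_sum]
  · simpa [Finsupp.degree_eq_sum] using hdeg

end LatticeIdeal

section FullRank

theorem exists_ne_zero_smul_mem_of_finrank_le {R M : Type*} [CommRing R] [IsDomain R]
    [AddCommGroup M] [Module R M] [Module.Finite R M] {N : Submodule R M}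
    (h : Module.finrank R M ≤ Module.finrank R N) (v : M) : ∃ r : R, r ≠ 0 ∧ r • v ∈ N := by
  have hquot : Module.finrank R (M ⧸ N) = 0 := by
    have := N.finrank_quotient_add_finrank
    omega
  obtain ⟨r, hr, hrv⟩ := Module.finrank_eq_zero_iff.1 hquot (N.mkQ v)
  exact ⟨r, hr, (Submodule.Quotient.mk_eq_zero N).1 hrv⟩

variable {ι : Type*} [Fintype ι] {𝓛 : AddSubgroup (ι → ℤ)}

lemma finrank_ker_sum_proj [Nonempty ι] :
    Module.finrank ℤ (∑ i, LinearMap.proj i : (ι → ℤ) →ₗ[ℤ] ℤ).ker + 1 = Fintype.card ι := by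
  classical
  set σ : (ι → ℤ) →ₗ[ℤ] ℤ := ∑ i, LinearMap.proj i
  have hσ : Function.Surjective σ := fun k =>
    ⟨Pi.single (Classical.arbitrary ι) k, by simp [σ]⟩
  have hquot := σ.ker.finrank_quotient_add_finrank
  rw [(σ.quotKerEquivOfSurjective hσ).finrank_eq, Module.finrank_self,
    Module.finrank_fintype_fun_eq_card] at hquot
  omega

theorem exists_pos_nsmul_mem [Nonempty ι] (hhom : ∀ a ∈ 𝓛, ∑ i, a i = 0)
    (hrank : Fintype.card ι ≤ Module.finrank ℤ 𝓛 + 1) {v : ι → ℤ} (hv : ∑ i, v i = 0) :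
    ∃ n : ℕ, 0 < n ∧ n • v ∈ 𝓛 := by
  let H : Submodule ℤ (ι → ℤ) := (∑ i, LinearMap.proj i : (ι → ℤ) →ₗ[ℤ] ℤ).ker
  have hle : 𝓛.toIntSubmodule ≤ H := fun a ha => by simpa [H] using hhom a ha
  have hfinrank : Module.finrank ℤ H ≤
      Module.finrank ℤ (𝓛.toIntSubmodule.comap H.subtype) := by
    rw [(Submodule.comapSubtypeEquivOfLe hle).finrank_eq]
    have := finrank_ker_sum_proj (ι := ι)
    exact Nat.le_of_add_le_add_right (this.trans_le hrank)
  obtain ⟨k, hk, hmem⟩ :=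
    exists_ne_zero_smul_mem_of_finrank_le hfinrank ⟨v, by simpa [H] using hv⟩
  replace hmem : k • v ∈ 𝓛 := hmem
  refine ⟨k.natAbs, Int.natAbs_pos.2 hk, ?_⟩
  rw [← natCast_zsmul, Int.natCast_natAbs]
  rcases abs_choice k with h | h
  · rwa [h]
  · simpa [h] using hmem

end FullRank

section GradedPiece

variable {σ R : Type*} [CommRing R] {I : Ideal (MvPolynomial σ R)} {d : ℕ}

/-- The degree `d` piece `I_d = I ∩ S_d` of an ideal, as a submodule of `S_d`. -/
noncomputable def gradedPiece (I : Ideal (MvPolynomial σ R)) (d : ℕ) :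
    Submodule R (homogeneousSubmodule σ R d) :=
  (I.restrictScalars R).comap (homogeneousSubmodule σ R d).subtype

lemma gradedPiece_eq_top_iff :
    gradedPiece I d = ⊤ ↔ ∀ a : σ →₀ ℕ, a.degree = d → monomial a (1 : R) ∈ I := by
  refine ⟨fun h a ha => ?_, fun h => eq_top_iff.2 ?_⟩
  · have : (⟨monomial a 1, isHomogeneous_monomial 1 ha⟩ : homogeneousSubmodule σ R d) ∈
        gradedPiece I d := h ▸ Submodule.mem_top
    exact this
  · rintro ⟨f, hf⟩ -
    change f ∈ I
    rw [f.as_sum]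
    refine I.sum_mem fun a ha => ?_
    have hdeg : a.degree = d := (hf.degree_eq_sum_deg_support ha).symm
    simpa only [C_mul_monomial, mul_one] using I.mul_mem_left (C (coeff a f)) (h a hdeg)

/-- Multiplication by `t_l` as a map `(S/I)_d → (S/I)_{d+1}`. -/
noncomputable def mulXQuotient (I : Ideal (MvPolynomial σ R)) (l : σ) (d : ℕ) :
    homogeneousSubmodule σ R d ⧸ gradedPiece I d →ₗ[R]
      homogeneousSubmodule σ R (d + 1) ⧸ gradedPiece I (d + 1) :=
  (gradedPiece I d).mapQ (gradedPiece I (d + 1))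
    ((LinearMap.mulLeft R (X l)).restrict fun _ hf => add_comm 1 d ▸ (isHomogeneous_X R l).mul hf)
    fun _ hf => I.mul_mem_left _ hf

lemma mulXQuotient_injective {l : σ}
    (hreg : IsSMulRegular (MvPolynomial σ R ⧸ I) (X l : MvPolynomial σ R)) :
    Function.Injective (mulXQuotient I l d) := by
  rw [isSMulRegular_quotient_iff_mem_of_smul_mem] at hreg
  refine (injective_iff_map_eq_zero _).2 fun x hx => ?_
  obtain ⟨f, rfl⟩ := Submodule.mkQ_surjective _ x
  have hmem := (Submodule.Quotient.mk_eq_zero (gradedPiece I (d + 1))).1 hx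
  exact (Submodule.Quotient.mk_eq_zero _).2 (hreg f hmem)

attribute [local instance] gradedAlgebra

lemma homogeneousComponent_add_mul {σ R : Type*} [CommSemiring R] {f : MvPolynomial σ R} {m : ℕ}
    (hf : f.IsHomogeneous m) (n : ℕ) (g : MvPolynomial σ R) :
    homogeneousComponent (m + n) (f * g) = f * homogeneousComponent n g := by
  rw [← decomposition.decompose'_apply, ← decomposition.decompose'_apply]
  exact DirectSum.coe_decompose_mul_add_of_left_mem (homogeneousSubmodule σ R) hf

lemma exists_isHomogeneous_sub_X_mul_mem {l : σ} {f : MvPolynomial σ R}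
    (hI : I.IsHomogeneous (homogeneousSubmodule σ R)) (hf : f.IsHomogeneous (d + 1))
    (hmem : f ∈ I ⊔ Ideal.span {X l}) :
    ∃ h : MvPolynomial σ R, h.IsHomogeneous d ∧ f - X l * h ∈ I := by
  obtain ⟨g, hg, _, hz, rfl⟩ := Submodule.mem_sup.1 hmem
  obtain ⟨h, rfl⟩ := Ideal.mem_span_singleton.1 hz
  refine ⟨homogeneousComponent d h, homogeneousComponent_isHomogeneous d h, ?_⟩
  rw [← homogeneousComponent_add_mul (isHomogeneous_X R l), add_comm 1 d,
    ← homogeneousComponent_eq_self hf, ← map_sub, add_sub_cancel_right]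
  exact homogeneousComponent_mem_of_mem hI hg (d + 1)

lemma range_mulXQuotient (hI : I.IsHomogeneous (homogeneousSubmodule σ R)) (l : σ) :
    (mulXQuotient I l d).range =
      (gradedPiece (I ⊔ Ideal.span {X l}) (d + 1)).map (gradedPiece I (d + 1)).mkQ := by
  apply le_antisymm
  · rintro _ ⟨x, rfl⟩
    obtain ⟨f, rfl⟩ := Submodule.mkQ_surjective _ x
    refine ⟨_, ?_, rfl⟩
    exact Ideal.mul_mem_right _ _ (Ideal.mem_sup_right (Ideal.mem_span_singleton_self _))
  · rintro _ ⟨f, hf, rfl⟩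
    obtain ⟨h, hh, hsub⟩ := exists_isHomogeneous_sub_X_mul_mem hI f.2 hf
    exact ⟨Submodule.mkQ _ ⟨h, hh⟩,
      ((Submodule.Quotient.eq (gradedPiece I (d + 1))).2 hsub).symm⟩

end GradedPiece

section HilbertFunction

instance finite_homogeneousSubmodule {σ R : Type*} [Finite σ] [CommSemiring R] (d : ℕ) :
    Module.Finite R (homogeneousSubmodule σ R d) :=
  Module.Finite.iff_fg.2 (homogeneousSubmodule_fg σ R d)

variable {K : Type*} [Field K] {s : ℕ} {I : Ideal (MvPolynomial (Fin s) K)} {d : ℕ}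

theorem hilbertFunction_eq_zero_iff :
    hilbertFunction I d = 0 ↔ ∀ a : Fin s →₀ ℕ, a.degree = d → monomial a (1 : K) ∈ I := by
  rw [← gradedPiece_eq_top_iff, ← Submodule.Quotient.subsingleton_iff]
  exact Module.finrank_zero_iff

lemma hilbertFunction_eq_zero_of_le {J : Ideal (MvPolynomial (Fin s) K)} (hIJ : I ≤ J)
    (h : hilbertFunction I d = 0) : hilbertFunction J d = 0 :=
  hilbertFunction_eq_zero_iff.2 fun a ha => hIJ (hilbertFunction_eq_zero_iff.1 h a ha)

attribute [local instance] gradedAlgebra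

-- Dimension count in the exact sequence `0 → (S/I)_d → (S/I)_{d+1} → (S/(I, t_l))_{d+1} → 0`.
theorem hilbertFunction_succ (hI : I.IsHomogeneous (homogeneousSubmodule (Fin s) K)) {l : Fin s}
    (hreg : IsSMulRegular (MvPolynomial (Fin s) K ⧸ I) (X l : MvPolynomial (Fin s) K)) (d : ℕ) :
    hilbertFunction I (d + 1) =
      hilbertFunction (I ⊔ Ideal.span {X l}) (d + 1) + hilbertFunction I d := by
  have hle : gradedPiece I (d + 1) ≤ gradedPiece (I ⊔ Ideal.span {X l}) (d + 1) :=
    fun _ hf => Ideal.mem_sup_left hf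
  have hquot := ((gradedPiece (I ⊔ Ideal.span {X l}) (d + 1)).map
    (gradedPiece I (d + 1)).mkQ).finrank_quotient_add_finrank
  rw [(Submodule.quotientQuotientEquivQuotient _ _ hle).finrank_eq, ← range_mulXQuotient hI,
    LinearMap.finrank_range_of_inj (mulXQuotient_injective hreg)] at hquot
  exact hquot.symm

theorem hilbertFunction_eq_of_le (hI : I.IsHomogeneous (homogeneousSubmodule (Fin s) K))
    {l : Fin s}
    (hreg : IsSMulRegular (MvPolynomial (Fin s) K ⧸ I) (X l : MvPolynomial (Fin s) K)) {D : ℕ}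
    (hzero : ∀ d, D < d → hilbertFunction (I ⊔ Ideal.span {X l}) d = 0) (hd : D ≤ d) :
    hilbertFunction I d = hilbertFunction I D := by
  induction d, hd using Nat.le_induction with
  | base => rfl
  | succ d hd ih => rw [hilbertFunction_succ hI hreg, hzero _ (Nat.lt_succ_of_le hd), zero_add, ih]

end HilbertFunction

section Regularity

variable {K : Type*} [Field K] {s : ℕ} {I : Ideal (MvPolynomial (Fin s) K)}

theorem indexOfRegularity_le_of_hilbertFunction_eq_zero {r : ℕ}
    (h : ∀ d, r ≤ d → hilbertFunction I d = 0) : indexOfRegularity I ≤ r :=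
  Nat.sInf_le ⟨0, fun d hd => by simp [h d hd]⟩

theorem lt_indexOfRegularity {r d : ℕ} (h : ∀ e, r ≤ e → hilbertFunction I e = 0)
    (hd : hilbertFunction I d ≠ 0) : d < indexOfRegularity I := by
  refine Nat.lt_of_succ_le (le_csInf ⟨r, 0, fun e he => by simp [h e he]⟩ ?_)
  rintro t ⟨p, hp⟩
  by_contra! hlt
  have hp_zero : p = 0 := by
    have infinite_roots := (Set.Ici_infinite (max r t)).image (Nat.cast_injective (R := ℚ)).injOn
    refine p.eq_of_infinite_eval_eq 0 (infinite_roots.mono ?_)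
    rintro _ ⟨e, he : max r t ≤ e, rfl⟩
    simp [hp e (le_of_max_le_right he), h e (le_of_max_le_left he)]
  have hp_eval := hp d (Nat.lt_succ_iff.1 hlt)
  rw [hp_zero, Polynomial.eval_zero] at hp_eval
  exact hd (Nat.cast_eq_zero.1 hp_eval.symm)

end Regularity

section PurePowers

lemma monomial_mem_span_X_pow_iff {σ R : Type*} [CommSemiring R] [Nontrivial R] {e : σ → ℕ}
    {a : σ →₀ ℕ} :
    monomial a (1 : R) ∈ Ideal.span (Set.range fun i => (X i ^ e i : MvPolynomial σ R)) ↔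
      ∃ i, e i ≤ a i := by
  have hrange : (Set.range fun i => (X i ^ e i : MvPolynomial σ R)) =
      (fun b => monomial b 1) '' Set.range fun i => Finsupp.single i (e i) := by
    rw [← Set.range_comp]
    simp only [Function.comp_def, X_pow_eq_monomial]
  classical
  simp [hrange, mem_ideal_span_monomial_image, coeff_monomial]

variable {K : Type*} [Field K] {s : ℕ} {e : Fin s → ℕ}

theorem hilbertFunction_span_X_pow_eq_zero_iff (he : ∀ i, 0 < e i) {d : ℕ} :
    hilbertFunction (Ideal.span (Set.range fun i => (X i ^ e i : MvPolynomial (Fin s) K))) d = 0 ↔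
      ∑ i, (e i - 1) < d := by
  simp only [hilbertFunction_eq_zero_iff, monomial_mem_span_X_pow_iff]
  refine ⟨fun h => ?_, ?_⟩
  · by_contra! hle
    -- The socle generator of `S/(t_i^{e_i})`: exactly its divisors lie outside the ideal.
    let top : Fin s →₀ ℕ := Finsupp.equivFunOnFinite.symm fun i => e i - 1
    obtain ⟨a, hle_top, hdeg⟩ := top.exists_le_degree_eq d (by simpa [top, Finsupp.degree_eq_sum])
    obtain ⟨i, hi⟩ := h a hdeg
    have : a i ≤ e i - 1 := hle_top i
    have := he i
    omega
  · rintro h a rfl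
    rw [Finsupp.degree_eq_sum] at h
    obtain ⟨i, -, hi⟩ := Finset.exists_lt_of_sum_lt h
    exact ⟨i, by omega⟩

theorem indexOfRegularity_span_X_pow (he : ∀ i, 0 < e i) :
    indexOfRegularity (Ideal.span (Set.range fun i => (X i ^ e i : MvPolynomial (Fin s) K))) =
      ∑ i, (e i - 1) + 1 := by
  have hzero := fun d => (hilbertFunction_span_X_pow_eq_zero_iff (K := K) he (d := d)).2
  refine le_antisymm (indexOfRegularity_le_of_hilbertFunction_eq_zero hzero)
    (lt_indexOfRegularity hzero ?_)
  rw [Ne, hilbertFunction_span_X_pow_eq_zero_iff he]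
  exact lt_irrefl _

end PurePowers

section CompleteIntersection

variable {R K : Type*} [CommRing R] [Field K] {m : ℕ}

/-- The complete intersection ideal `L' = (t_1^{n_1} - t_s^{n_1}, …, t_{s-1}^{n_{s-1}} -
t_s^{n_{s-1}})`, with `s = m + 1` so that `t_s` is the last variable. -/
noncomputable def powerDifferenceIdeal (R : Type*) [CommRing R] (n : Fin m → ℕ) :
    Ideal (MvPolynomial (Fin (m + 1)) R) :=
  Ideal.span (Set.range fun i => X i.castSucc ^ n i - X (Fin.last m) ^ n i)

lemma powerDifferenceIdeal_sup_span_X_last {n : Fin m → ℕ} (hn : ∀ i, 0 < n i) :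
    powerDifferenceIdeal R n ⊔ Ideal.span {X (Fin.last m)} =
      Ideal.span (Set.range fun i => X i ^ (Fin.snoc n 1 : Fin (m + 1) → ℕ) i) := by
  set J : Ideal (MvPolynomial (Fin (m + 1)) R) :=
    Ideal.span (Set.range fun i => X i ^ (Fin.snoc n 1 : Fin (m + 1) → ℕ) i)
  have pow_mem : ∀ i : Fin m, X i.castSucc ^ n i ∈ J := fun i =>
    Ideal.subset_span ⟨i.castSucc, by simp⟩
  have last_mem : X (Fin.last m) ∈ J := Ideal.subset_span ⟨Fin.last m, by simp⟩
  refine le_antisymm (sup_le (Ideal.span_le.2 ?_) ?_) (Ideal.span_le.2 ?_)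
  · rintro _ ⟨i, rfl⟩
    exact J.sub_mem (pow_mem i) (J.pow_mem_of_mem last_mem _ (hn i))
  · exact (Ideal.span_singleton_le_iff_mem _).2 last_mem
  · have last_mem_sup : X (Fin.last m) ∈ powerDifferenceIdeal R n ⊔ Ideal.span {X (Fin.last m)} :=
      Ideal.mem_sup_right (Ideal.mem_span_singleton_self _)
    rintro _ ⟨i, rfl⟩
    induction i using Fin.lastCases with
    | last => simpa using last_mem_sup
    | cast i =>
      have sub_mem : X i.castSucc ^ n i - X (Fin.last m) ^ n i ∈ powerDifferenceIdeal R n :=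
        Ideal.subset_span ⟨i, rfl⟩
      simpa using Ideal.add_mem _ (Ideal.mem_sup_left sub_mem)
        (Ideal.pow_mem_of_mem _ last_mem_sup _ (hn i))

lemma sum_snoc_one_sub_one (n : Fin m → ℕ) :
    ∑ i, ((Fin.snoc n 1 : Fin (m + 1) → ℕ) i - 1) = ∑ i, (n i - 1) := by
  simp [Fin.sum_univ_castSucc]

lemma snoc_one_pos {n : Fin m → ℕ} (hn : ∀ i, 0 < n i) (i : Fin (m + 1)) :
    0 < (Fin.snoc n 1 : Fin (m + 1) → ℕ) i := by
  induction i using Fin.lastCases <;> simp [hn]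

theorem hilbertFunction_powerDifferenceIdeal_sup_eq_zero_iff {n : Fin m → ℕ}
    (hn : ∀ i, 0 < n i) {d : ℕ} :
    hilbertFunction (powerDifferenceIdeal K n ⊔ Ideal.span {X (Fin.last m)}) d = 0 ↔
      ∑ i, (n i - 1) < d := by
  rw [powerDifferenceIdeal_sup_span_X_last hn,
    hilbertFunction_span_X_pow_eq_zero_iff (snoc_one_pos hn), sum_snoc_one_sub_one]

theorem indexOfRegularity_powerDifferenceIdeal_sup {n : Fin m → ℕ} (hn : ∀ i, 0 < n i) :
    indexOfRegularity (powerDifferenceIdeal K n ⊔ Ideal.span {X (Fin.last m)}) =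
      ∑ i, (n i - 1) + 1 := by
  rw [powerDifferenceIdeal_sup_span_X_last hn,
    indexOfRegularity_span_X_pow (snoc_one_pos hn), sum_snoc_one_sub_one]

theorem exists_powerDifferenceIdeal_le_latticeIdeal {𝓛 : AddSubgroup (Fin (m + 1) → ℤ)}
    (hhom : ∀ a ∈ 𝓛, ∑ i, a i = 0) (hrank : m ≤ Module.finrank ℤ 𝓛) :
    ∃ n : Fin m → ℕ, (∀ i, 0 < n i) ∧ powerDifferenceIdeal K n ≤ latticeIdeal K 𝓛 := by
  have exists_exponent : ∀ i : Fin m, ∃ n : ℕ, 0 < n ∧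
      n • (Pi.single i.castSucc 1 - Pi.single (Fin.last m) 1) ∈ 𝓛 := fun i =>
    exists_pos_nsmul_mem hhom (by simpa using hrank) (by simp)
  choose n hn hmem using exists_exponent
  refine ⟨n, hn, Ideal.span_le.2 ?_⟩
  rintro _ ⟨i, rfl⟩
  exact X_pow_sub_X_pow_mem_latticeIdeal (hmem i)

end CompleteIntersection

/-- Proposition: let `L = I(𝓛) ⊆ S` be a graded lattice ideal of dimension 1 (so `𝓛` is
homogeneous of rank `s-1`).  Then there exist positive integers `n_1, …, n_{s-1}` such that:
(a) the complete intersection ideal `L' = (t_1^{n_1} - t_s^{n_1}, …, t_{s-1}^{n_{s-1}} -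
t_s^{n_{s-1}})` is contained in `L`;
(b) `reg(S/(t_s, L)) ≤ reg(S/(t_s, L')) = ∑ (n_i - 1) + 1`; and
(c) `H_L(d) = H_L(d-1) = deg S/L` for every `d ≥ ∑ (n_i - 1) + 1`, where `deg S/L` is the
eventual constant value `c` of the Hilbert function of `S/L`. -/
theorem lattice_ideal_dim_one_regularity_bound
    (K : Type*) [Field K] {s : ℕ} (hs : 0 < s)
    (𝓛 : AddSubgroup (Fin s → ℤ))
    (hhom : ∀ a ∈ 𝓛, ∑ i, a i = 0)
    (hrank : Module.finrank ℤ 𝓛 = s - 1) :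
    ∃ n : Fin (s - 1) → ℕ, (∀ i, 0 < n i) ∧
      -- (a)
      Ideal.span (Set.range fun i : Fin (s - 1) =>
          (X (Fin.castLE (Nat.sub_le s 1) i) ^ n i -
            X (⟨s - 1, Nat.sub_lt hs Nat.one_pos⟩ : Fin s) ^ n i :
              MvPolynomial (Fin s) K)) ≤ latticeIdeal K 𝓛 ∧
      -- (b)
      (indexOfRegularity (latticeIdeal K 𝓛 ⊔
          Ideal.span {(X (⟨s - 1, Nat.sub_lt hs Nat.one_pos⟩ : Fin s) :
            MvPolynomial (Fin s) K)}) ≤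
        indexOfRegularity (Ideal.span (Set.range fun i : Fin (s - 1) =>
            (X (Fin.castLE (Nat.sub_le s 1) i) ^ n i -
              X (⟨s - 1, Nat.sub_lt hs Nat.one_pos⟩ : Fin s) ^ n i :
                MvPolynomial (Fin s) K)) ⊔
          Ideal.span {(X (⟨s - 1, Nat.sub_lt hs Nat.one_pos⟩ : Fin s) :
            MvPolynomial (Fin s) K)}) ∧
       indexOfRegularity (Ideal.span (Set.range fun i : Fin (s - 1) =>
            (X (Fin.castLE (Nat.sub_le s 1) i) ^ n i -
              X (⟨s - 1, Nat.sub_lt hs Nat.one_pos⟩ : Fin s) ^ n i :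
                MvPolynomial (Fin s) K)) ⊔
          Ideal.span {(X (⟨s - 1, Nat.sub_lt hs Nat.one_pos⟩ : Fin s) :
            MvPolynomial (Fin s) K)}) = (∑ i, (n i - 1)) + 1) ∧
      -- (c)
      ∃ c : ℕ, (∃ N : ℕ, ∀ d ≥ N, hilbertFunction (latticeIdeal K 𝓛 : Ideal (MvPolynomial (Fin s) K)) d = c) ∧
        ∀ d : ℕ, (∑ i, (n i - 1)) + 1 ≤ d →
          hilbertFunction (latticeIdeal K 𝓛 : Ideal (MvPolynomial (Fin s) K)) d = c ∧
          hilbertFunction (latticeIdeal K 𝓛 : Ideal (MvPolynomial (Fin s) K)) (d - 1) = c := by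
  obtain _ | m := s
  · exact absurd hs (lt_irrefl 0)
  obtain ⟨n, hn, hle⟩ := exists_powerDifferenceIdeal_le_latticeIdeal (K := K) hhom hrank.ge
  have hindex := indexOfRegularity_powerDifferenceIdeal_sup (K := K) hn
  have hzero : ∀ d, ∑ i, (n i - 1) < d →
      hilbertFunction (latticeIdeal K 𝓛 ⊔ Ideal.span {X (Fin.last m)}) d = 0 := fun d hd =>
    hilbertFunction_eq_zero_of_le (sup_le_sup_right hle _)
      ((hilbertFunction_powerDifferenceIdeal_sup_eq_zero_iff hn).2 hd)
  have hconst : ∀ d, ∑ i, (n i - 1) ≤ d → hilbertFunction (latticeIdeal K 𝓛) d =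
      hilbertFunction (latticeIdeal K 𝓛) (∑ i, (n i - 1)) := fun d =>
    hilbertFunction_eq_of_le (isHomogeneous_latticeIdeal hhom)
      (isSMulRegular_X_quotient_latticeIdeal (Fin.last m)) hzero
  refine ⟨n, hn, hle, ⟨?_, hindex⟩, _, ⟨_, hconst⟩, fun d hd => ⟨?_, ?_⟩⟩
  · exact (indexOfRegularity_le_of_hilbertFunction_eq_zero hzero).trans_eq hindex.symm
  · exact hconst d (Nat.le_of_succ_le hd)
  · exact hconst (d - 1) (Nat.le_sub_one_of_lt hd)
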